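/- Let w solve ∂²_t w − c²Δw = −a(∂_t u + ∂_t v) in (0,T)×Ω with w = 0 on (0,T)×∂Ω, where w = u − v as above. Then the energy of w satisfies E_Ω(w(0)) = E_Ω(w(T)) + 2∫_{[0,T]×Ω} a c^{-2} |∂_t u|² dt dx − 2∫_{[0,T]×Ω} a c^{-2} |∂_t v|² dt dx. In particular E_Ω(w(0)) ≤ E_Ω(w(T)) + 2∫_{[0,T]×Ω} a c^{-2}|∂_t u|² dt dx. -/

import Mathlib

open MeasureTheory

/-!
Differentiating the energy density `|∇w|² + c⁻²|∂ₜw|²` in time and inserting the wave equation gives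

  `2 div(∂ₜw ∇w) - 2 a c⁻² (∂ₜu - ∂ₜv)(∂ₜu + ∂ₜv)`,

whose second term is `-2 a c⁻² (|∂ₜu|² - |∂ₜv|²)`. The identity then follows from the fundamental
theorem of calculus in `t` at each `x` and Fubini, once the divergence is known to integrate to `0`
over `Ω` at each time in `(0, T)`. The inequality drops the nonnegative term in `v`.

No regularity of `∂Ω` is available, so the divergence theorem has to be replaced by an argument that
works on every bounded open set (`integral_by_parts`). The function `∂ₜw` vanishes on `∂Ω`, so its
extension by zero is Lipschitz (`lipschitzWith_indicator`) and can be integrated by parts on all of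
`ℝⁿ`. The only danger is `∂Ω`, which may have positive measure; but the extension vanishes there,
and a line derivative is zero almost everywhere on the zero set of the function
(`ae_lineDeriv_eq_zero_of_eq_zero`).
-/

/-! ### Integration by parts without boundary regularity -/

/-- Almost everywhere on the zero set of a continuous function its line derivative vanishes: along
each line, the zeros at which the derivative is nonzero are isolated, hence countable. Points where
the line derivative does not exist are harmless, since `lineDeriv` is then `0` by convention. -/
theorem ae_lineDeriv_eq_zero_of_eq_zero {n : ℕ} {g : EuclideanSpace ℝ (Fin n) → ℝ}
    (hg : Continuous g) (v : EuclideanSpace ℝ (Fin n)) :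
    ∀ᵐ x : EuclideanSpace ℝ (Fin n), g x = 0 → lineDeriv ℝ g x v = 0 := by
  let L : ℝ →L[ℝ] EuclideanSpace ℝ (Fin n) := ContinuousLinearMap.smulRight (1 : ℝ →L[ℝ] ℝ) v
  have hs : MeasurableSet {x | g x = 0 → lineDeriv ℝ g x v = 0} := by
    have h1 : MeasurableSet {x | g x = 0} := hg.measurable (measurableSet_singleton 0)
    have h2 : MeasurableSet {x | lineDeriv ℝ g x v = 0} :=
      (measurable_lineDeriv hg) (measurableSet_singleton 0)
    have : {x | g x = 0 → lineDeriv ℝ g x v = 0}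
        = {x | g x = 0}ᶜ ∪ {x | lineDeriv ℝ g x v = 0} := by
      ext x; simp [imp_iff_not_or]
    rw [this]; exact h1.compl.union h2
  refine ae_mem_of_ae_add_linearMap_mem L.toLinearMap volume volume hs fun p => ?_
  have hcount := Set.Countable.measure_zero
    (countable_setOfPred_isolated_right_within (s := {t : ℝ | g (p + t • v) = 0})) volume
  filter_upwards [measure_eq_zero_iff_ae_notMem.1 hcount] with t ht
  change g (p + t • v) = 0 → lineDeriv ℝ g (p + t • v) v = 0
  intro h0
  by_contra hne
  apply ht
  refine ⟨h0, ?_⟩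
  have hd0 : HasLineDerivAt ℝ g (lineDeriv ℝ g (p + t • v) v) (p + t • v) v :=
    (differentiableAt_of_deriv_ne_zero hne).hasDerivAt
  have hd : HasDerivAt (fun s : ℝ => g (p + s • v)) (lineDeriv ℝ g (p + t • v) v) t := by
    have h3 : HasDerivAt (fun r : ℝ => g (p + t • v + r • v)) (lineDeriv ℝ g (p + t • v) v)
        (t - t) := by simpa [HasLineDerivAt] using hd0
    have h4 := h3.comp_sub_const t t
    refine h4.congr_of_eventuallyEq (Filter.Eventually.of_forall fun s => ?_)
    simp only [add_assoc, ← add_smul]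
    congr 3; ring
  have hev : ∀ᶠ z in nhdsWithin t {t}ᶜ, g (p + z • v) ≠ 0 := hd.eventually_ne hne
  rw [← Filter.empty_mem_iff_bot]
  have h5 : ∀ᶠ z in nhdsWithin t ({t : ℝ | g (p + t • v) = 0} ∩ Set.Ioi t),
      g (p + z • v) ≠ 0 :=
    hev.filter_mono (nhdsWithin_mono _ fun z hz => by
      simpa using (ne_of_gt hz.2))
  filter_upwards [h5, self_mem_nhdsWithin] with z hz hmem
  exact hz hmem.1

/-- A segment leaving an open set meets its boundary. -/
theorem exists_mem_segment_frontier {n : ℕ} {Ω : Set (EuclideanSpace ℝ (Fin n))}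
    (hΩ : IsOpen Ω) {x y : EuclideanSpace ℝ (Fin n)} (hx : x ∈ Ω) (hy : y ∉ Ω) :
    ∃ z ∈ segment ℝ x y, z ∈ frontier Ω := by
  by_contra! hcon
  have hpre : IsPreconnected (segment ℝ x y) := (convex_segment x y).isPreconnected
  have hcover : segment ℝ x y ⊆ Ω ∪ (closure Ω)ᶜ := by
    intro z hz
    by_cases h : z ∈ Ω
    · exact Or.inl h
    · refine Or.inr fun hcl => hcon z hz ?_
      rw [hΩ.frontier_eq]
      exact ⟨hcl, h⟩
  have hyc : y ∈ (closure Ω)ᶜ := (hcover (right_mem_segment ℝ x y)).resolve_left hy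
  obtain ⟨z, -, hz1, hz2⟩ := hpre Ω (closure Ω)ᶜ hΩ isClosed_closure.isOpen_compl hcover
    ⟨x, left_mem_segment ℝ x y, hx⟩ ⟨y, right_mem_segment ℝ x y, hyc⟩
  exact hz2 (subset_closure hz1)

/-- Extending by zero a Lipschitz function that vanishes on the boundary of an open set keeps the
Lipschitz constant; no regularity of the boundary is needed. -/
theorem lipschitzWith_indicator {n : ℕ} {Ω : Set (EuclideanSpace ℝ (Fin n))}
    (hΩ : IsOpen Ω) {φ : EuclideanSpace ℝ (Fin n) → ℝ} {C : NNReal} (hφ : LipschitzWith C φ)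
    (h0 : ∀ x ∈ frontier Ω, φ x = 0) : LipschitzWith C (Ω.indicator φ) := by
  have key : ∀ x ∈ Ω, ∀ y ∉ Ω, |φ x| ≤ C * dist x y := by
    intro x hx y hy
    obtain ⟨z, hz, hzf⟩ := exists_mem_segment_frontier hΩ hx hy
    have h1 := hφ.dist_le_mul x z
    rw [h0 z hzf, Real.dist_eq, sub_zero] at h1
    have h2 : dist x z ≤ dist x y := by
      have := dist_add_dist_of_mem_segment hz
      linarith [dist_nonneg (x := z) (y := y)]
    exact h1.trans (mul_le_mul_of_nonneg_left h2 C.coe_nonneg)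
  refine LipschitzWith.of_dist_le_mul fun x y => ?_
  by_cases hx : x ∈ Ω <;> by_cases hy : y ∈ Ω
  · simpa [hx, hy] using hφ.dist_le_mul x y
  · simpa [hx, hy] using key x hx y hy
  · have := key y hy x hx
    rw [dist_comm y x] at this
    simpa [hx, hy, Real.dist_eq] using this
  · simp only [Set.indicator_of_notMem hx, Set.indicator_of_notMem hy, dist_self]
    positivity

/-- Integration by parts on an open set with arbitrary boundary, for compactly supported factors.
The zero extension of `φ` is integrated by parts on the whole space; its derivative vanishes almost
everywhere outside `Ω`, including on a boundary of positive measure. -/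
theorem integral_by_parts_of_compactSupport {n : ℕ} {Ω : Set (EuclideanSpace ℝ (Fin n))}
    (hΩ : IsOpen Ω) {φ F : EuclideanSpace ℝ (Fin n) → ℝ}
    (hφ : ContDiff ℝ 1 φ) (hF : ContDiff ℝ 1 F) (hφc : HasCompactSupport φ)
    (hFc : HasCompactSupport F) (h0 : ∀ x ∈ frontier Ω, φ x = 0) (e : EuclideanSpace ℝ (Fin n)) :
    ∫ x in Ω, (fderiv ℝ φ x e * F x + φ x * fderiv ℝ F x e) = 0 := by
  obtain ⟨C, hC⟩ := hφ.lipschitzWith_of_hasCompactSupport hφc (by simp)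
  obtain ⟨D, hD⟩ := hF.lipschitzWith_of_hasCompactSupport hFc (by simp)
  have hg := lipschitzWith_indicator hΩ hC h0
  have hparts := LipschitzWith.integral_lineDeriv_mul_eq (μ := volume) hg hD hFc e
  have hm := hΩ.measurableSet
  have hl : ∫ x, lineDeriv ℝ (Ω.indicator φ) x e * F x = ∫ x in Ω, fderiv ℝ φ x e * F x := by
    rw [← integral_indicator hm]
    apply integral_congr_ae
    filter_upwards [ae_lineDeriv_eq_zero_of_eq_zero hg.continuous e] with x hx
    by_cases hxΩ : x ∈ Ω
    · have h1 : Ω.indicator φ =ᶠ[nhds x] φ := by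
        filter_upwards [hΩ.mem_nhds hxΩ] with y hy
        simp [hy]
      rw [h1.lineDeriv_eq,
        ((hφ.differentiable (by simp)) x).lineDeriv_eq_fderiv]
      simp [hxΩ]
    · simp [hxΩ, hx (by simp [hxΩ])]
  have hr : ∫ x, lineDeriv ℝ F x (-e) * Ω.indicator φ x
      = - ∫ x in Ω, φ x * fderiv ℝ F x e := by
    rw [← integral_indicator hm, ← integral_neg]
    congr 1 with x
    rw [((hF.differentiable (by simp)) x).lineDeriv_eq_fderiv]
    by_cases hxΩ : x ∈ Ω <;> simp [hxΩ, mul_comm]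
  have hi1 : Integrable (fun x => fderiv ℝ φ x e * F x) :=
    (((hφ.continuous_fderiv (by simp)).clm_apply continuous_const).mul
      hF.continuous).integrable_of_hasCompactSupport hFc.mul_left
  have hi2 : Integrable (fun x => φ x * fderiv ℝ F x e) :=
    (hφ.continuous.mul ((hF.continuous_fderiv (by simp)).clm_apply
      continuous_const)).integrable_of_hasCompactSupport hφc.mul_right
  rw [integral_add hi1.integrableOn hi2.integrableOn, ← hl, hparts, hr, neg_add_cancel]

/-- Integration by parts, with boundary term zero, on a bounded open set with arbitrary boundary, one factor vanishing on the
boundary. -/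
theorem integral_by_parts {n : ℕ} {Ω : Set (EuclideanSpace ℝ (Fin n))}
    (hΩ : IsOpen Ω) (hb : Bornology.IsBounded Ω) {φ F : EuclideanSpace ℝ (Fin n) → ℝ}
    (hφ : ContDiff ℝ 1 φ) (hF : ContDiff ℝ 1 F)
    (h0 : ∀ x ∈ frontier Ω, φ x = 0) (e : EuclideanSpace ℝ (Fin n)) :
    ∫ x in Ω, (fderiv ℝ φ x e * F x + φ x * fderiv ℝ F x e) = 0 := by
  -- A cutoff equal to `1` near every point of `Ω` reduces to compact support.
  obtain ⟨R, hR, hΩR⟩ := hb.subset_closedBall_lt 0 0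
  let χ : ContDiffBump (0 : EuclideanSpace ℝ (Fin n)) := ⟨R, R + 1, hR, by linarith⟩
  have hχ : ContDiff ℝ 1 χ := χ.contDiff
  have hχc : HasCompactSupport χ := χ.hasCompactSupport
  have h1 : ∀ x ∈ Ω, ∀ f : EuclideanSpace ℝ (Fin n) → ℝ, (fun y => χ y * f y) =ᶠ[nhds x] f := by
    intro x hx f
    filter_upwards [hΩ.mem_nhds hx] with y hy
    rw [χ.one_of_mem_closedBall (hΩR hy), one_mul]
  rw [← integral_by_parts_of_compactSupport hΩ (hχ.mul hφ) (hχ.mul hF) hχc.mul_right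
    hχc.mul_right (fun x hx => by simp [h0 x hx]) e]
  refine setIntegral_congr_fun hΩ.measurableSet fun x hx => ?_
  rw [(h1 x hx φ).fderiv_eq, (h1 x hx F).fderiv_eq, (h1 x hx φ).eq_of_nhds,
    (h1 x hx F).eq_of_nhds]

/-! ### Derivatives on space-time slices -/

/-- The directional derivative `p ↦ Df(p) v`. With `v = (1, 0)` this is `∂ₜf` and with
`v = (0, eᵢ)` it is `∂ᵢf`, for `f` a function on space-time `ℝ × ℝⁿ`. -/
noncomputable def dirDeriv {P : Type*} [NormedAddCommGroup P] [NormedSpace ℝ P] (f : P → ℝ) (v : P)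
    (p : P) : ℝ := fderiv ℝ f p v

theorem dirDeriv_contDiff {P : Type*} [NormedAddCommGroup P] [NormedSpace ℝ P] {f : P → ℝ}
    (hf : ContDiff ℝ (⊤ : ℕ∞) f) (v : P) : ContDiff ℝ (⊤ : ℕ∞) (dirDeriv f v) :=
  (hf.fderiv_right (m := (⊤ : ℕ∞)) (by simp)).clm_apply contDiff_const

theorem dirDeriv_comm {P : Type*} [NormedAddCommGroup P] [NormedSpace ℝ P] {f : P → ℝ}
    (hf : ContDiff ℝ (⊤ : ℕ∞) f) (v z p : P) :
    dirDeriv (dirDeriv f v) z p = dirDeriv (dirDeriv f z) v p := by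
  have hd : DifferentiableAt ℝ (fderiv ℝ f) p :=
    ((hf.fderiv_right (m := (⊤ : ℕ∞)) (by simp)).differentiable (by simp)) p
  have key : ∀ a b : P, dirDeriv (dirDeriv f a) b p = fderiv ℝ (fderiv ℝ f) p b a := by
    intro a b
    have h1 := (hd.hasFDerivAt.clm_apply (hasFDerivAt_const a p)).fderiv
    change fderiv ℝ (fun q => fderiv ℝ f q a) p b = _
    rw [h1]; simp
  have hsymm : IsSymmSndFDerivAt ℝ f p :=
    hf.contDiffAt.isSymmSndFDerivAt
      (by
        simp only [minSmoothness_of_isRCLikeNormedField]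
        exact WithTop.coe_le_coe.2 (le_top : (2 : ℕ∞) ≤ ⊤))
  rw [key, key, hsymm z v]

theorem hasDerivAt_slice {n : ℕ} {f : ℝ × EuclideanSpace ℝ (Fin n) → ℝ}
    (hf : ContDiff ℝ (⊤ : ℕ∞) f) (t : ℝ) (x : EuclideanSpace ℝ (Fin n)) :
    HasDerivAt (fun r => f (r, x)) (dirDeriv f (1, 0) (t, x)) t :=
  ((hf.differentiable (by simp)) (t, x)).hasFDerivAt.comp_hasDerivAt t
    ((hasDerivAt_id t).prodMk (hasDerivAt_const t x))

theorem fderiv_slice {n : ℕ} {f : ℝ × EuclideanSpace ℝ (Fin n) → ℝ}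
    (hf : ContDiff ℝ (⊤ : ℕ∞) f) (t : ℝ) (x e : EuclideanSpace ℝ (Fin n)) :
    fderiv ℝ (fun y => f (t, y)) x e = dirDeriv f (0, e) (t, x) := by
  have h := (((hf.differentiable (by simp)) (t, x)).hasFDerivAt.comp x
    (hasFDerivAt_prodMk_right t x)).fderiv
  change fderiv ℝ (f ∘ fun y => (t, y)) x e = _
  rw [h]; simp [dirDeriv]

theorem contDiff_slice {n : ℕ} {f : ℝ × EuclideanSpace ℝ (Fin n) → ℝ}
    (hf : ContDiff ℝ (⊤ : ℕ∞) f) (t : ℝ) : ContDiff ℝ (⊤ : ℕ∞) (fun y => f (t, y)) :=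
  hf.comp (contDiff_const.prodMk contDiff_id)

theorem norm_gradient_sq {n : ℕ} (f : EuclideanSpace ℝ (Fin n) → ℝ)
    (x : EuclideanSpace ℝ (Fin n)) :
    ‖gradient f x‖ ^ 2 = ∑ i : Fin n, (fderiv ℝ f x (EuclideanSpace.single i 1)) ^ 2 := by
  rw [EuclideanSpace.real_norm_sq_eq]
  refine Finset.sum_congr rfl fun i _ => ?_
  rw [← inner_gradient_left, EuclideanSpace.inner_single_right]
  simp

/-! ### Integrability of continuous functions over bounded cylinders -/

theorem integrable_restrict_of_continuous {n : ℕ} {Ω : Set (EuclideanSpace ℝ (Fin n))}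
    (hb : Bornology.IsBounded Ω) {f : EuclideanSpace ℝ (Fin n) → ℝ} (hf : Continuous f) :
    Integrable f (volume.restrict Ω) :=
  (hf.continuousOn.integrableOn_compact hb.isCompact_closure).mono_set subset_closure

theorem integrable_prod_of_continuous {n : ℕ} {Ω : Set (EuclideanSpace ℝ (Fin n))}
    (hb : Bornology.IsBounded Ω) {f : ℝ × EuclideanSpace ℝ (Fin n) → ℝ} (hf : Continuous f)
    (T : ℝ) : Integrable f ((volume.restrict (Set.uIoc 0 T)).prod (volume.restrict Ω)) := by
  rw [Measure.prod_restrict]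
  exact (hf.continuousOn.integrableOn_compact (isCompact_uIcc.prod hb.isCompact_closure)).mono_set
    (Set.prod_mono Set.uIoc_subset_uIcc subset_closure)

theorem intervalIntegrable_integral {n : ℕ} {Ω : Set (EuclideanSpace ℝ (Fin n))}
    (hb : Bornology.IsBounded Ω) {f : ℝ × EuclideanSpace ℝ (Fin n) → ℝ} (hf : Continuous f)
    (T : ℝ) : IntervalIntegrable (fun t => ∫ x in Ω, f (t, x)) volume 0 T := by
  rw [intervalIntegrable_iff]
  exact (integrable_prod_of_continuous hb hf T).integral_prod_left

/-! ### The energy identity -/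

/-- Energy identity for the error function `w = u - v`:
`E_Ω(w(0)) = E_Ω(w(T)) + 2∫∫ a c⁻²|∂ₜu|² - 2∫∫ a c⁻²|∂ₜv|²`, and hence
`E_Ω(w(0)) ≤ E_Ω(w(T)) + 2∫∫ a c⁻²|∂ₜu|²`. -/
theorem error_function_energy_identity
    (n : ℕ) (Ω : Set (EuclideanSpace ℝ (Fin n)))
    (hΩopen : IsOpen Ω) (hΩbdd : Bornology.IsBounded Ω)
    (T : ℝ) (hT : 0 < T)
    (a c : EuclideanSpace ℝ (Fin n) → ℝ)
    (ha : ∀ x, 0 ≤ a x) (hc : ∀ x, 0 < c x)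
    (hasm : ContDiff ℝ (⊤ : ℕ∞) a) (hcsm : ContDiff ℝ (⊤ : ℕ∞) c)
    (u v : ℝ → EuclideanSpace ℝ (Fin n) → ℝ)
    (husm : ContDiff ℝ (⊤ : ℕ∞) (fun p : ℝ × EuclideanSpace ℝ (Fin n) => u p.1 p.2))
    (hvsm : ContDiff ℝ (⊤ : ℕ∞) (fun p : ℝ × EuclideanSpace ℝ (Fin n) => v p.1 p.2))
    (w : ℝ → EuclideanSpace ℝ (Fin n) → ℝ)
    (hw : ∀ t x, w t x = u t x - v t x)
    -- w solves the undamped wave equation with source -a(∂ₜu + ∂ₜv) on (0,T) × Ω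
    (hwPDE : ∀ t ∈ Set.Ioo (0:ℝ) T, ∀ x ∈ Ω,
      deriv (fun s => deriv (fun r => w r x) s) t
        - (c x)^2 * (∑ i : Fin n,
            fderiv ℝ (fun y => fderiv ℝ (w t) y (EuclideanSpace.single i 1)) x
              (EuclideanSpace.single i 1))
      = -(a x) * (deriv (fun s => u s x) t + deriv (fun s => v s x) t))
    -- w = 0 on (0,T) × ∂Ω
    (hbdry : ∀ t ∈ Set.Ioo (0:ℝ) T, ∀ x ∈ frontier Ω, w t x = 0) :
    ((∫ x in Ω, (‖gradient (w 0) x‖^2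
        + ((c x)⁻¹)^2 * (deriv (fun r => w r x) 0)^2))
      = (∫ x in Ω, (‖gradient (w T) x‖^2
          + ((c x)⁻¹)^2 * (deriv (fun r => w r x) T)^2))
        + 2 * (∫ t in (0:ℝ)..T, ∫ x in Ω,
            a x * ((c x)⁻¹)^2 * (deriv (fun r => u r x) t)^2)
        - 2 * (∫ t in (0:ℝ)..T, ∫ x in Ω,
            a x * ((c x)⁻¹)^2 * (deriv (fun r => v r x) t)^2)) ∧
    ((∫ x in Ω, (‖gradient (w 0) x‖^2
        + ((c x)⁻¹)^2 * (deriv (fun r => w r x) 0)^2))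
      ≤ (∫ x in Ω, (‖gradient (w T) x‖^2
          + ((c x)⁻¹)^2 * (deriv (fun r => w r x) T)^2))
        + 2 * (∫ t in (0:ℝ)..T, ∫ x in Ω,
            a x * ((c x)⁻¹)^2 * (deriv (fun r => u r x) t)^2)) := by
  set W : ℝ × EuclideanSpace ℝ (Fin n) → ℝ := fun p => w p.1 p.2 with hW
  set U : ℝ × EuclideanSpace ℝ (Fin n) → ℝ := fun p => u p.1 p.2 with hU
  set V : ℝ × EuclideanSpace ℝ (Fin n) → ℝ := fun p => v p.1 p.2 with hV
  have hWsm : ContDiff ℝ (⊤ : ℕ∞) W := by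
    have : W = fun p => U p - V p := funext fun p => hw p.1 p.2
    rw [this]; exact husm.sub hvsm
  let ε : Fin n → EuclideanSpace ℝ (Fin n) := fun i => EuclideanSpace.single i 1
  let Wt := dirDeriv W (1, 0)
  let Wi : Fin n → ℝ × EuclideanSpace ℝ (Fin n) → ℝ := fun i => dirDeriv W (0, ε i)
  let Ut := dirDeriv U (1, 0)
  let Vt := dirDeriv V (1, 0)
  have hWt : ContDiff ℝ (⊤ : ℕ∞) Wt := dirDeriv_contDiff hWsm _
  have hWi : ∀ i, ContDiff ℝ (⊤ : ℕ∞) (Wi i) := fun i => dirDeriv_contDiff hWsm _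
  have hUt : ContDiff ℝ (⊤ : ℕ∞) Ut := dirDeriv_contDiff husm _
  have hVt : ContDiff ℝ (⊤ : ℕ∞) Vt := dirDeriv_contDiff hvsm _
  have dw : ∀ t x, deriv (fun r => w r x) t = Wt (t, x) :=
    fun t x => (hasDerivAt_slice hWsm t x).deriv
  have du : ∀ t x, deriv (fun r => u r x) t = Ut (t, x) :=
    fun t x => (hasDerivAt_slice husm t x).deriv
  have dv : ∀ t x, deriv (fun r => v r x) t = Vt (t, x) :=
    fun t x => (hasDerivAt_slice hvsm t x).deriv
  have dwi : ∀ t x i, fderiv ℝ (w t) x (EuclideanSpace.single i 1) = Wi i (t, x) :=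
    fun t x i => fderiv_slice hWsm t x _
  have hWtUV : ∀ t x, Wt (t, x) = Ut (t, x) - Vt (t, x) := by
    intro t x
    rw [← dw, ← du, ← dv]
    have h := (hasDerivAt_slice husm t x).sub (hasDerivAt_slice hvsm t x)
    have h2 : (fun r => w r x) = (fun r => U (r, x)) - fun r => V (r, x) :=
      funext fun r => hw r x
    rw [h2, h.deriv, du, dv]
  simp only [norm_gradient_sq, dw, du, dv, dwi]
  simp only [dw, du, dv, dwi] at hwPDE
  have pde : ∀ t ∈ Set.Ioo (0:ℝ) T, ∀ x ∈ Ω,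
      dirDeriv Wt (1, 0) (t, x) = (c x) ^ 2 * ∑ i, dirDeriv (Wi i) (0, ε i) (t, x)
        - a x * (Ut (t, x) + Vt (t, x)) := by
    intro t ht x hx
    have h := hwPDE t ht x hx
    rw [(hasDerivAt_slice hWt t x).deriv] at h
    simp only [fun i => fderiv_slice (hWi i) t x (EuclideanSpace.single i 1)] at h
    linear_combination h
  have hcinv : Continuous fun x => ((c x)⁻¹) ^ 2 :=
    (hcsm.continuous.inv₀ fun x => (hc x).ne').pow 2
  -- The energy density and its time derivative, as functions on space-time.
  let dens : ℝ × EuclideanSpace ℝ (Fin n) → ℝ := fun p =>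
    ∑ i, Wi i p ^ 2 + ((c p.2)⁻¹) ^ 2 * Wt p ^ 2
  let dens' : ℝ × EuclideanSpace ℝ (Fin n) → ℝ := fun p =>
    ∑ i, 2 * (Wi i p * dirDeriv (Wi i) (1, 0) p)
      + ((c p.2)⁻¹) ^ 2 * (2 * (Wt p * dirDeriv Wt (1, 0) p))
  let Ku : ℝ × EuclideanSpace ℝ (Fin n) → ℝ := fun p => a p.2 * ((c p.2)⁻¹) ^ 2 * Ut p ^ 2
  let Kv : ℝ × EuclideanSpace ℝ (Fin n) → ℝ := fun p => a p.2 * ((c p.2)⁻¹) ^ 2 * Vt p ^ 2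
  have hac : Continuous fun p : ℝ × EuclideanSpace ℝ (Fin n) => a p.2 * ((c p.2)⁻¹) ^ 2 :=
    (hasm.continuous.comp continuous_snd).mul (hcinv.comp continuous_snd)
  have hKu : Continuous Ku := hac.mul (hUt.continuous.pow 2)
  have hKv : Continuous Kv := hac.mul (hVt.continuous.pow 2)
  have hdens : Continuous dens :=
    (continuous_finsetSum _ fun i _ => (hWi i).continuous.pow 2).add
      ((hcinv.comp continuous_snd).mul (hWt.continuous.pow 2))
  have hdens' : Continuous dens' :=
    (continuous_finsetSum _ fun i _ => continuous_const.mul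
      ((hWi i).continuous.mul (dirDeriv_contDiff (hWi i) _).continuous)).add
      ((hcinv.comp continuous_snd).mul (continuous_const.mul
        (hWt.continuous.mul (dirDeriv_contDiff hWt _).continuous)))
  have hslice : ∀ {f : ℝ × EuclideanSpace ℝ (Fin n) → ℝ}, Continuous f → ∀ t,
      Integrable (fun x => f (t, x)) (volume.restrict Ω) := fun hf t =>
    integrable_restrict_of_continuous hΩbdd (hf.comp (by fun_prop))
  have hderiv : ∀ t x, HasDerivAt (fun r => dens (r, x)) (dens' (t, x)) t := by
    intro t x
    have h1 := HasDerivAt.fun_sum (u := Finset.univ)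
      fun i _ => (hasDerivAt_slice (hWi i) t x).fun_pow 2
    have h2 := ((hasDerivAt_slice hWt t x).fun_pow 2).const_mul (((c x)⁻¹) ^ 2)
    refine (h1.add h2).congr_deriv ?_
    simp only [dens']
    congr 1
    · exact Finset.sum_congr rfl fun i _ => by push_cast; ring
    · push_cast; ring
  have hftc : ∀ x, ∫ t in (0:ℝ)..T, dens' (t, x) = dens (T, x) - dens (0, x) := fun x =>
    intervalIntegral.integral_eq_sub_of_hasDerivAt (fun t _ => hderiv t x)
      ((hdens'.comp (by fun_prop : Continuous fun t : ℝ => (t, x))).intervalIntegrable _ _)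
  -- The boundary condition persists under time differentiation because `(0, T)` is open.
  have hbt : ∀ t ∈ Set.Ioo (0:ℝ) T, ∀ x ∈ frontier Ω, Wt (t, x) = 0 := by
    intro t ht x hx
    rw [← dw]
    have : (fun r => w r x) =ᶠ[nhds t] fun _ => 0 := by
      filter_upwards [isOpen_Ioo.mem_nhds ht] with r hr using hbdry r hr x hx
    rw [this.deriv_eq, deriv_const]
  have hinner : ∀ t ∈ Set.Ioo (0:ℝ) T,
      ∫ x in Ω, dens' (t, x) = 2 * (∫ x in Ω, Kv (t, x)) - 2 * ∫ x in Ω, Ku (t, x) := by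
    intro t ht
    let div : Fin n → ℝ × EuclideanSpace ℝ (Fin n) → ℝ := fun i p =>
      dirDeriv Wt (0, ε i) p * Wi i p + Wt p * dirDeriv (Wi i) (0, ε i) p
    have hdivc : ∀ i, Continuous (div i) := fun i =>
      ((dirDeriv_contDiff hWt _).continuous.mul (hWi i).continuous).add
        (hWt.continuous.mul (dirDeriv_contDiff (hWi i) _).continuous)
    have hdiv : ∀ i, ∫ x in Ω, div i (t, x) = 0 := by
      intro i
      have h := integral_by_parts hΩopen hΩbdd ((contDiff_slice hWt t).of_le (by simp))
        ((contDiff_slice (hWi i) t).of_le (by simp)) (hbt t ht) (ε i)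
      simpa only [fderiv_slice hWt, fderiv_slice (hWi i)] using h
    have hpt : ∀ x ∈ Ω, dens' (t, x)
        = 2 * ∑ i, div i (t, x) + (2 * Kv (t, x) - 2 * Ku (t, x)) := by
      intro x hx
      have hcx : ((c x)⁻¹) ^ 2 * (c x) ^ 2 = 1 := by
        have := (hc x).ne'
        field_simp
      have hcomm : ∀ i, dirDeriv (Wi i) (1, 0) (t, x) = dirDeriv Wt (0, ε i) (t, x) :=
        fun i => dirDeriv_comm hWsm _ _ _
      simp only [dens', div, Ku, Kv, hcomm, pde t ht x hx, Finset.sum_add_distrib,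
        ← Finset.mul_sum]
      have hs : ∑ i, Wi i (t, x) * dirDeriv Wt (0, ε i) (t, x)
          = ∑ i, dirDeriv Wt (0, ε i) (t, x) * Wi i (t, x) :=
        Finset.sum_congr rfl fun i _ => mul_comm _ _
      rw [hs]
      rw [hWtUV t x]
      linear_combination (2 * (Ut (t, x) - Vt (t, x))
        * ∑ i, dirDeriv (Wi i) (0, ε i) (t, x)) * hcx
    rw [setIntegral_congr_fun hΩopen.measurableSet hpt, integral_add, integral_sub,
      integral_const_mul, integral_const_mul, integral_const_mul, integral_finsetSum]
    · simp [hdiv]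
    · exact fun i _ => hslice (hdivc i) t
    · exact (hslice hKv t).const_mul 2
    · exact (hslice hKu t).const_mul 2
    · exact (integrable_finsetSum _ fun i _ => hslice (hdivc i) t).const_mul 2
    · exact ((hslice hKv t).const_mul 2).sub ((hslice hKu t).const_mul 2)
  have hmain : (∫ x in Ω, dens (T, x)) - ∫ x in Ω, dens (0, x)
      = 2 * (∫ t in (0:ℝ)..T, ∫ x in Ω, Kv (t, x))
        - 2 * ∫ t in (0:ℝ)..T, ∫ x in Ω, Ku (t, x) := by
    rw [← integral_sub (hslice hdens T) (hslice hdens 0)]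
    simp only [← hftc]
    rw [← intervalIntegral_integral_swap (f := fun t x => dens' (t, x))
      (integrable_prod_of_continuous hΩbdd hdens' T)]
    have hae : ∫ t in (0:ℝ)..T, ∫ x in Ω, dens' (t, x)
        = ∫ t in (0:ℝ)..T, (2 * (∫ x in Ω, Kv (t, x)) - 2 * ∫ x in Ω, Ku (t, x)) := by
      rw [intervalIntegral.integral_of_le hT.le, intervalIntegral.integral_of_le hT.le,
        integral_Ioc_eq_integral_Ioo, integral_Ioc_eq_integral_Ioo]
      exact setIntegral_congr_fun measurableSet_Ioo hinner
    rw [hae, intervalIntegral.integral_sub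
      ((intervalIntegrable_integral hΩbdd hKv T).const_mul 2)
      ((intervalIntegrable_integral hΩbdd hKu T).const_mul 2),
      intervalIntegral.integral_const_mul, intervalIntegral.integral_const_mul]
  have hnn : 0 ≤ ∫ t in (0:ℝ)..T, ∫ x in Ω, Kv (t, x) :=
    intervalIntegral.integral_nonneg hT.le fun t _ => integral_nonneg fun x =>
      mul_nonneg (mul_nonneg (ha x) (sq_nonneg _)) (sq_nonneg _)
  simp only [dens, Ku, Kv] at hmain hnn
  constructor <;> linarith
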